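/- If ∇⁰ and ∇¹ are both flat ℝ-linear connections of L on E and λ = ∇¹ − ∇⁰, then for every p ≥ 1: cs_p(∇⁰, ∇¹) = (−1)^{p+1} · (p!·(p−1)!/(2p−1)!) · Tr_*(λ^{∧(2p−1)}), where λ^{∧(2p−1)} is the (2p−1)-fold wedge power of the End_C(E)-valued 1-form λ. -/

import Mathlib

open Module

/-- The trace over `C` of an `ℝ`-linear endomorphism of `E` whose underlying
function happens to be `C`-linear (and `0` otherwise). -/
noncomputable def trR (C : Type*) {E : Type*} [CommRing C] [AddCommGroup E]
    [Module ℝ E] [Module C E] (e : E →ₗ[ℝ] E) : C :=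
  letI := Classical.propDecidable
  if h : ∃ g : E →ₗ[C] E, ⇑g = ⇑e then LinearMap.trace C E h.choose else 0

/-- An ℝ-linear connection of the Lie algebra `L` (with anchor `ρ`) on the `C`-module `E`. -/
def IsConn {L C E : Type*} [LieRing L] [LieAlgebra ℝ L] [CommRing C] [Algebra ℝ C]
    [AddCommGroup E] [Module ℝ E] [Module C E]
    (ρ : L →ₗ[ℝ] Derivation ℝ C C) (D : L →ₗ[ℝ] Module.End ℝ E) : Prop :=
  ∀ (a : L) (f : C) (e : E), D a (f • e) = f • D a e + ρ a f • e

/-- The curvature of an ℝ-linear map `D : L →ₗ[ℝ] End ℝ E`. -/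
def curv {L E : Type*} [LieRing L] [LieAlgebra ℝ L] [AddCommGroup E] [Module ℝ E]
    (D : L →ₗ[ℝ] Module.End ℝ E) (a b : L) : Module.End ℝ E :=
  D a * D b - D b * D a - D ⁅a, b⁆

/-- The curvature as an `End ℝ E`-valued 2-form. -/
def curv2 {L E : Type*} [LieRing L] [LieAlgebra ℝ L] [AddCommGroup E] [Module ℝ E]
    (D : L →ₗ[ℝ] Module.End ℝ E) : (Fin 2 → L) → Module.End ℝ E :=
  fun a => curv D (a 0) (a 1)

/-- The Chevalley–Eilenberg style differential of a `V`-valued `n`-form on `L`,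
with respect to an action `act` of `L` on `V`:
`(dω)(a₁,…,a_{n+1}) = Σᵢ (−1)^{i+1} act(aᵢ)(ω(a₁,…,âᵢ,…)) +
  Σ_{i<j} (−1)^{i+j} ω(⁅aᵢ,aⱼ⁆, a₁,…,âᵢ,…,âⱼ,…)`. -/
def dGen {L V : Type*} [LieRing L] [AddCommGroup V] (act : L → V → V) :
    {n : ℕ} → ((Fin n → L) → V) → ((Fin (n + 1) → L) → V)
  | 0, ω, a => act (a 0) (ω Fin.elim0)
  | (m + 1), ω, a =>
      (∑ i : Fin (m + 2), (-1 : ℤ) ^ (i : ℕ) • act (a i) (ω (fun k => a (i.succAbove k)))) +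
      ∑ i : Fin (m + 2), ∑ j : Fin (m + 2),
        if h : (i : ℕ) < (j : ℕ) then
          (-1 : ℤ) ^ ((i : ℕ) + (j : ℕ)) • ω (Fin.cons ⁅a i, a j⁆
            (fun k : Fin m => a (j.succAbove
              ((⟨(i : ℕ), by have := j.isLt; omega⟩ : Fin (m + 1)).succAbove k))))
        else 0

/-- The differential `d_ρ` on `C`-valued ℝ-linear forms on `L`. -/
def dRho {L C : Type*} [LieRing L] [LieAlgebra ℝ L] [CommRing C] [Algebra ℝ C]
    (ρ : L →ₗ[ℝ] Derivation ℝ C C) {n : ℕ} (ω : (Fin n → L) → C) :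
    (Fin (n + 1) → L) → C :=
  dGen (fun a c => ρ a c) ω

/-- The differential `d^{∇̄}` on `End ℝ E`-valued ℝ-linear forms on `L`,
where `∇̄_a = [∇_a, ·]`. -/
def dEnd {L E : Type*} [LieRing L] [LieAlgebra ℝ L] [AddCommGroup E] [Module ℝ E]
    (D : L →ₗ[ℝ] Module.End ℝ E) {n : ℕ} (ω : (Fin n → L) → Module.End ℝ E) :
    (Fin (n + 1) → L) → Module.End ℝ E :=
  dGen (fun a φ => D a * φ - φ * D a) ω

/-- The wedge product (with composition as multiplication of values) of
`End ℝ E`-valued forms: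
`(ω∧η)(a₁,…,a_{m+n}) = (1/(m!·n!)) Σ_{τ} sgn τ · ω(a_{τ(1)},…) ∘ η(a_{τ(m+1)},…)`. -/
noncomputable def wedge {L E : Type*} [AddCommGroup E] [Module ℝ E] {m n : ℕ}
    (ω : (Fin m → L) → Module.End ℝ E) (η : (Fin n → L) → Module.End ℝ E) :
    (Fin (m + n) → L) → Module.End ℝ E :=
  fun a => ((m.factorial * n.factorial : ℝ))⁻¹ •
    ∑ τ : Equiv.Perm (Fin (m + n)), ((Equiv.Perm.sign τ : ℤ) •
      (ω (fun i => a (τ (Fin.castAdd n i))) * η (fun j => a (τ (Fin.natAdd m j)))))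

/-- The `p`-th wedge power of an `End ℝ E`-valued 2-form. -/
noncomputable def wpow {L E : Type*} [AddCommGroup E] [Module ℝ E]
    (R : (Fin 2 → L) → Module.End ℝ E) :
    (p : ℕ) → (Fin (2 * p) → L) → Module.End ℝ E
  | 0 => fun _ => 1
  | (p + 1) => fun a => wedge R (wpow R p) (fun i => a (Fin.cast (by omega) i))

/-- The `k`-th wedge power of an `End ℝ E`-valued 1-form. -/
noncomputable def wpow1 {L E : Type*} [AddCommGroup E] [Module ℝ E]
    (θ : (Fin 1 → L) → Module.End ℝ E) :
    (k : ℕ) → (Fin k → L) → Module.End ℝ E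
  | 0 => fun _ => 1
  | (k + 1) => fun a => wedge θ (wpow1 θ k) (fun i => a (Fin.cast (by omega) i))

/-- The Chern character form `ch_p(∇) = Tr_*((R^∇)^{∧p})`. -/
noncomputable def chp {L E : Type*} (C : Type*) [LieRing L] [LieAlgebra ℝ L]
    [CommRing C] [AddCommGroup E] [Module ℝ E] [Module C E]
    (D : L →ₗ[ℝ] Module.End ℝ E) (p : ℕ) : (Fin (2 * p) → L) → C :=
  fun a => trR C (wpow (curv2 D) p a)

/-- `∫₀ˢ f(t) dt` for a function `f : ℝ → C` given by a polynomial with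
coefficients in the ℝ-algebra `C` (and `0` if `f` is not polynomial). -/
noncomputable def intPolyTo {C : Type*} [CommRing C] [Algebra ℝ C] (s : ℝ) (f : ℝ → C) : C :=
  letI := Classical.propDecidable
  if h : ∃ P : Polynomial C, ∀ t : ℝ, f t = Polynomial.eval (algebraMap ℝ C t) P then
    ∑ k ∈ Finset.range (h.choose.natDegree + 1),
      (s ^ (k + 1) / ((k : ℝ) + 1)) • h.choose.coeff k
  else 0

/-- The valuewise integral over the standard 2-simplex
`Δ² = {(t₁,t₂) : t₁ ≥ 0, t₂ ≥ 0, t₁ + t₂ ≤ 1}` of a `C`-valued polynomial function. -/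
noncomputable def intSimplex2 {C : Type*} [CommRing C] [Algebra ℝ C] (f : ℝ → ℝ → C) : C :=
  intPolyTo 1 (fun t1 => intPolyTo (1 - t1) (fun t2 => f t1 t2))

/-- The Chern–Simons transgression form for a pair of ℝ-linear connections:
`cs_p(∇⁰,∇¹) = p·∫₀¹ Tr_*(λ ∧ (R_t)^{∧(p−1)}) dt` where `λ = ∇¹ − ∇⁰` and
`R_t` is the curvature of `∇⁰ + t•λ`. -/
noncomputable def csPair {L E : Type*} (C : Type*) [LieRing L] [LieAlgebra ℝ L]
    [CommRing C] [Algebra ℝ C] [AddCommGroup E] [Module ℝ E] [Module C E]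
    (D0 D1 : L →ₗ[ℝ] Module.End ℝ E) (p : ℕ) : (Fin (2 * (p - 1) + 1) → L) → C :=
  fun a => (p : ℝ) • intPolyTo 1 (fun t =>
    trR C (wedge (fun v : Fin 1 → L => (D1 - D0) (v 0))
      (wpow (curv2 (D0 + t • (D1 - D0))) (p - 1))
      (fun i => a (Fin.cast (by omega) i))))

/-- The Chern–Simons transgression form for a triple of ℝ-linear connections:
`cs_p(∇⁰,∇¹,∇²) = −p(p−1)·∫_{Δ²} Tr_*(λ₁ ∧ λ₂ ∧ (R_{(t₁,t₂)})^{∧(p−2)}) dt₁dt₂`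
where `λᵢ = ∇ⁱ − ∇⁰` and `R_{(t₁,t₂)}` is the curvature of `∇⁰ + t₁•λ₁ + t₂•λ₂`. -/
noncomputable def csTriple {L E : Type*} (C : Type*) [LieRing L] [LieAlgebra ℝ L]
    [CommRing C] [Algebra ℝ C] [AddCommGroup E] [Module ℝ E] [Module C E]
    (D0 D1 D2 : L →ₗ[ℝ] Module.End ℝ E) (p : ℕ) : (Fin (2 * (p - 2) + 2) → L) → C :=
  fun a => (-((p : ℝ) * ((p : ℝ) - 1))) • intSimplex2 (fun t1 t2 =>
    trR C (wedge (fun v : Fin 1 → L => (D1 - D0) (v 0))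
      (wedge (fun v : Fin 1 → L => (D2 - D0) (v 0))
        (wpow (curv2 (D0 + t1 • (D1 - D0) + t2 • (D2 - D0))) (p - 2)))
      (fun i => a (Fin.cast (by omega) i))))


/-- Alternating ordered product of a 1-form. -/
noncomputable def altP {L E : Type*} [AddCommGroup E] [Module ℝ E]
    (θ : L → Module.End ℝ E) (n : ℕ) (a : Fin n → L) : Module.End ℝ E :=
  ∑ τ : Equiv.Perm (Fin n), ((Equiv.Perm.sign τ : ℤ) • (List.ofFn fun i => θ (a (τ i))).prod)

theorem altP_cast {L E : Type*} [AddCommGroup E] [Module ℝ E]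
    (θ : L → Module.End ℝ E) {n m : ℕ} (h : n = m) (a : Fin m → L) :
    altP θ n (fun i => a (Fin.cast h i)) = altP θ m a := by
  subst h; rfl

theorem wedge_altP {L E : Type*} [AddCommGroup E] [Module ℝ E]
    (θ : L → Module.End ℝ E) (m n : ℕ) (a : Fin (m + n) → L) :
    wedge (altP θ m) (altP θ n) a = altP θ (m + n) a := by
  have key : ∀ (σ : Equiv.Perm (Fin m)) (π : Equiv.Perm (Fin n)),
      ∑ τ : Equiv.Perm (Fin (m + n)), ((Equiv.Perm.sign τ : ℤ) •
        (((Equiv.Perm.sign σ : ℤ) •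
            (List.ofFn fun i => θ (a (τ (Fin.castAdd n (σ i))))).prod) *
         ((Equiv.Perm.sign π : ℤ) •
            (List.ofFn fun i => θ (a (τ (Fin.natAdd m (π i))))).prod)))
        = altP θ (m + n) a := by
    intro σ π
    unfold altP
    let g : Equiv.Perm (Fin (m + n)) := finSumFinEquiv.permCongr (Equiv.Perm.sumCongr σ π)
    have hg : Equiv.Perm.sign g = Equiv.Perm.sign σ * Equiv.Perm.sign π := by
      simp [g, Equiv.Perm.sign_permCongr, Equiv.Perm.sign_sumCongr]
    have hg1 : ∀ i, g (Fin.castAdd n i) = Fin.castAdd n (σ i) := by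
      intro i; simp [g, Equiv.permCongr_apply]
    have hg2 : ∀ i, g (Fin.natAdd m i) = Fin.natAdd m (π i) := by
      intro i; simp [g, Equiv.permCongr_apply]
    refine Fintype.sum_equiv (Equiv.mulRight g) _ _ ?_
    intro τ
    have e : (fun i : Fin (m + n) => θ (a ((τ * g) i))) =
        Fin.append (fun i => θ (a (τ (Fin.castAdd n (σ i)))))
          (fun i => θ (a (τ (Fin.natAdd m (π i))))) := by
      funext i
      refine Fin.addCases (fun i => ?_) (fun i => ?_) i
      · simp [Equiv.Perm.mul_apply, hg1]
      · simp [Equiv.Perm.mul_apply, hg2]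
    simp only [Equiv.coe_mulRight]
    rw [e, List.ofFn_fin_append, List.prod_append, Equiv.Perm.sign_mul, hg]
    simp only [Units.val_mul, smul_mul_assoc, mul_smul_comm, smul_smul]
    congr 1
    ring
  unfold wedge
  have : ∑ τ : Equiv.Perm (Fin (m + n)), ((Equiv.Perm.sign τ : ℤ) •
      (altP θ m (fun i => a (τ (Fin.castAdd n i))) *
        altP θ n (fun j => a (τ (Fin.natAdd m j)))))
      = ((m.factorial * n.factorial : ℝ)) • altP θ (m + n) a := by
    conv_lhs => 
      enter [2, τ]
      rw [altP, altP, Finset.sum_mul_sum, Finset.smul_sum]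
      enter [2, σ]
      rw [Finset.smul_sum]
    rw [Finset.sum_comm]
    conv_lhs => 
      enter [2, σ]
      rw [Finset.sum_comm]
      enter [2, π]
      rw [key σ π]
    simp only [Finset.sum_const, Finset.card_univ, Fintype.card_perm, Fintype.card_fin]
    rw [smul_smul, ← Nat.cast_mul, Nat.cast_smul_eq_nsmul]
  rw [this, smul_smul, inv_mul_cancel₀, one_smul]
  positivity

theorem altP_one {L E : Type*} [AddCommGroup E] [Module ℝ E]
    (θ : L → Module.End ℝ E) : altP θ 1 = fun v => θ (v 0) := by
  funext v
  simp [altP]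

theorem altP_zero {L E : Type*} [AddCommGroup E] [Module ℝ E]
    (θ : L → Module.End ℝ E) (v) : altP θ 0 v = 1 := by
  simp [altP]

theorem altP_two {L E : Type*} [AddCommGroup E] [Module ℝ E]
    (θ : L → Module.End ℝ E) (v) :
    altP θ 2 v = θ (v 0) * θ (v 1) - θ (v 1) * θ (v 0) := by
  rw [altP, ← Equiv.sum_comp (Equiv.Perm.decomposeFin.symm), Fintype.sum_prod_type]
  simp [Fin.sum_univ_two, List.ofFn_succ, Equiv.Perm.decomposeFin.symm_sign, sub_eq_add_neg]

theorem wpow1_eq {L E : Type*} [AddCommGroup E] [Module ℝ E]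
    (θ : L → Module.End ℝ E) (k : ℕ) :
    wpow1 (fun u : Fin 1 → L => θ (u 0)) k = altP θ k := by
  induction k with
  | zero => funext v; rw [altP_zero]; rfl
  | succ k ih =>
    funext v
    rw [wpow1, ih, ← altP_one]
    beta_reduce
    rw [wedge_altP, altP_cast]

theorem wedge_smul_smul {L E : Type*} [AddCommGroup E] [Module ℝ E] {m n : ℕ} (r s : ℝ)
    (ω : (Fin m → L) → Module.End ℝ E) (η : (Fin n → L) → Module.End ℝ E) (a) :
    wedge (fun v => r • ω v) (fun v => s • η v) a = (r * s) • wedge ω η a := by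
  unfold wedge
  rw [smul_comm (r * s)]
  congr 1
  rw [Finset.smul_sum]
  refine Finset.sum_congr rfl fun τ _ => ?_
  rw [smul_mul_smul_comm, smul_comm]

theorem wpow_eq {L E : Type*} [AddCommGroup E] [Module ℝ E]
    (θ : L → Module.End ℝ E) (c : ℝ) (k : ℕ) :
    wpow (fun v => c • altP θ 2 v) k = fun v => c ^ k • altP θ (2 * k) v := by
  induction k with
  | zero => funext v; simp [altP_zero, wpow]
  | succ k ih =>
    funext v
    rw [wpow, ih]
    beta_reduce
    rw [wedge_smul_smul, wedge_altP, altP_cast _ (by omega), pow_succ']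

theorem curv2_eq {L E : Type*} [LieRing L] [LieAlgebra ℝ L] [AddCommGroup E] [Module ℝ E]
    (D0 D1 : L →ₗ[ℝ] Module.End ℝ E)
    (hflat0 : ∀ a b : L, curv D0 a b = 0) (hflat1 : ∀ a b : L, curv D1 a b = 0) (t : ℝ) :
    curv2 (D0 + t • (D1 - D0)) = fun v => (t ^ 2 - t) • altP (fun x => (D1 - D0) x) 2 v := by
  funext v
  rw [altP_two]
  have e0 := sub_eq_zero.1 (hflat0 (v 0) (v 1))
  have e1 := sub_eq_zero.1 (hflat1 (v 0) (v 1))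
  simp only [curv2, curv, LinearMap.add_apply, LinearMap.smul_apply, LinearMap.sub_apply]
  rw [← e0, ← e1]
  generalize D0 (v 0) = A
  generalize D0 (v 1) = B
  generalize D1 (v 0) = A'
  generalize D1 (v 1) = B'
  simp only [mul_add, add_mul, mul_sub, sub_mul, smul_mul_assoc, mul_smul_comm, smul_sub, smul_add]
  module

theorem trR_eq (C : Type*) {E : Type*} [CommRing C] [AddCommGroup E]
    [Module ℝ E] [Module C E] (e : E →ₗ[ℝ] E) (g : E →ₗ[C] E) (h : ⇑g = ⇑e) :
    trR C e = LinearMap.trace C E g := by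
  have hh : ∃ g : E →ₗ[C] E, ⇑g = ⇑e := ⟨g, h⟩
  unfold trR
  rw [dif_pos hh]
  congr 1
  exact DFunLike.coe_injective (hh.choose_spec.trans h.symm)

theorem trR_smul (C : Type*) {E : Type*} [CommRing C] [Algebra ℝ C] [AddCommGroup E]
    [Module ℝ E] [Module C E] [IsScalarTower ℝ C E] (r : ℝ) (e : E →ₗ[ℝ] E) :
    trR C (r • e) = r • trR C e := by
  have key : ∀ (r : ℝ) (e : E →ₗ[ℝ] E) (g : E →ₗ[C] E), ⇑g = ⇑e →
      ⇑(algebraMap ℝ C r • g) = ⇑(r • e) := by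
    intro r e g h
    funext x
    simp [← h]
  by_cases h : ∃ g : E →ₗ[C] E, ⇑g = ⇑e
  · obtain ⟨g, h⟩ := h
    rw [trR_eq C e g h, trR_eq C _ _ (key r e g h), map_smul, algebraMap_smul]
  · by_cases hr : r = 0
    · subst hr
      rw [trR_eq C _ (0 : E →ₗ[C] E) (by funext x; simp)]
      simp
    · have h' : ¬ ∃ g : E →ₗ[C] E, ⇑g = ⇑(r • e) := by
        rintro ⟨g, hg⟩
        refine h ⟨_, (key r⁻¹ _ g hg).trans ?_⟩
        rw [smul_smul, inv_mul_cancel₀ hr, one_smul]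
      unfold trR
      rw [dif_neg h, dif_neg h', smul_zero]

theorem poly_zero {C : Type*} [CommRing C] [Algebra ℝ C] (P : Polynomial C)
    (h : ∀ t : ℝ, Polynomial.eval (algebraMap ℝ C t) P = 0) : P = 0 := by
  ext k
  rw [Polynomial.coeff_zero, ← Module.forall_dual_apply_eq_zero_iff ℝ]
  intro φ
  let Q : Polynomial ℝ := ∑ i ∈ Finset.range (P.natDegree + 1), Polynomial.monomial i (φ (P.coeff i))
  have hQ : Q = 0 := by
    apply Polynomial.funext
    intro t
    have := congrArg φ (h t)
    rw [Polynomial.eval_eq_sum_range, map_sum] at this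
    simp only [Q, Polynomial.eval_finset_sum, Polynomial.eval_monomial, Polynomial.eval_zero]
    rw [map_zero] at this
    rw [← this]
    refine Finset.sum_congr rfl fun i _ => ?_
    rw [← map_pow, mul_comm (P.coeff i), ← Algebra.smul_def, map_smul, smul_eq_mul, mul_comm]
  by_cases hk : k ∈ Finset.range (P.natDegree + 1)
  · have := congrArg (fun q => Polynomial.coeff q k) hQ
    simp only [Q, Polynomial.finset_sum_coeff, Polynomial.coeff_monomial, Polynomial.coeff_zero] at this
    rwa [Finset.sum_ite_eq' , if_pos hk] at this
  · rw [Polynomial.coeff_eq_zero_of_natDegree_lt, map_zero]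
    simpa using hk

theorem intPoly_eq {C : Type*} [CommRing C] [Algebra ℝ C] (f : ℝ → C) (Q : Polynomial ℝ) (c : C)
    (hf : ∀ t, f t = Q.eval t • c) :
    intPolyTo 1 f = (∫ t in (0 : ℝ)..1, Q.eval t) • c := by
  let P : Polynomial C := Q.map (algebraMap ℝ C) * Polynomial.C c
  have hP : ∀ t : ℝ, f t = Polynomial.eval (algebraMap ℝ C t) P := by
    intro t
    simp only [P, hf, Algebra.smul_def, Polynomial.eval_mul, Polynomial.eval_C]
    rw [Polynomial.eval_map, Polynomial.eval₂_at_apply]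
  have hh : ∃ P : Polynomial C, ∀ t : ℝ, f t = Polynomial.eval (algebraMap ℝ C t) P := ⟨P, hP⟩
  unfold intPolyTo
  rw [dif_pos hh]
  have : hh.choose = P := by
    rw [← sub_eq_zero]
    apply poly_zero
    intro t
    rw [Polynomial.eval_sub, ← hP, ← hh.choose_spec, sub_self]
  rw [this]
  have hd : P.natDegree ≤ Q.natDegree :=
    (Polynomial.natDegree_mul_C_le _ _).trans Polynomial.natDegree_map_le
  rw [Finset.sum_subset (Finset.range_mono (Nat.succ_le_succ hd))]
  · have hi : (∫ t in (0 : ℝ)..1, Q.eval t)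
        = ∑ k ∈ Finset.range (Q.natDegree + 1), Q.coeff k * (1 / ((k : ℝ) + 1)) := by
      simp only [Polynomial.eval_eq_sum_range]
      rw [intervalIntegral.integral_finset_sum]
      · refine Finset.sum_congr rfl fun i _ => ?_
        rw [intervalIntegral.integral_const_mul, integral_pow]
        simp
      · intro i _
        apply Continuous.intervalIntegrable
        fun_prop
    rw [hi, Finset.sum_smul]
    refine Finset.sum_congr rfl fun i _ => ?_
    simp only [P, Polynomial.coeff_mul_C, Polynomial.coeff_map, one_pow]
    rw [← Algebra.smul_def, smul_smul, mul_comm]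
  · intro k _ hk
    rw [Polynomial.coeff_eq_zero_of_natDegree_lt, smul_zero]
    simpa using hk

theorem beta_int (n m : ℕ) : (∫ t in (0 : ℝ)..1, t ^ m * (1 - t) ^ n)
    = (m.factorial * n.factorial : ℝ) / (m + n + 1).factorial := by
  induction n generalizing m with
  | zero =>
    simp only [pow_zero, mul_one, integral_pow, Nat.factorial_zero, add_zero, Nat.factorial_succ]
    push_cast
    have := Nat.factorial_ne_zero m
    field_simp
    simp
  | succ n ih =>
    have h : (∫ t in (0 : ℝ)..1, (((m : ℝ) + 1) * (t ^ m * (1 - t) ^ (n + 1))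
        - ((n : ℝ) + 1) * (t ^ (m + 1) * (1 - t) ^ n))) = 0 := by
      rw [intervalIntegral.integral_eq_sub_of_hasDerivAt
        (f := fun t : ℝ => t ^ (m + 1) * (1 - t) ^ (n + 1))]
      · simp
      · intro t _
        have h1 := (hasDerivAt_pow (m + 1) t)
        have h2 : HasDerivAt (fun t : ℝ => (1 - t) ^ (n + 1))
            (((n + 1 : ℕ) : ℝ) * (1 - t) ^ n * (-1)) t :=
          ((hasDerivAt_id t).const_sub 1).pow (n + 1)
        refine (h1.mul h2).congr_deriv ?_
        push_cast
        ring
      · apply Continuous.intervalIntegrable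
        fun_prop
    rw [intervalIntegral.integral_sub, intervalIntegral.integral_const_mul,
      intervalIntegral.integral_const_mul, ih] at h
    · have e : m + 1 + n + 1 = m + (n + 1) + 1 := by ring
      rw [e] at h
      have h3 : (0 : ℝ) < (m : ℝ) + 1 := by positivity
      have h4 : ((m + (n + 1) + 1).factorial : ℝ) ≠ 0 := by positivity
      apply mul_left_cancel₀ h3.ne'
      rw [sub_eq_zero.1 h, Nat.factorial_succ m, Nat.factorial_succ n]
      push_cast
      ring
    · apply Continuous.intervalIntegrable
      fun_prop
    · apply Continuous.intervalIntegrable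
      fun_prop

/-- if `∇⁰` and `∇¹` are both flat and `λ = ∇¹ − ∇⁰`, then
`cs_p(∇⁰,∇¹) = (−1)^{p+1} · (p!·(p−1)!/(2p−1)!) · Tr_*(λ^{∧(2p−1)})`. -/
theorem stmt19 {L : Type*} {C : Type*} {E : Type*}
    [LieRing L] [LieAlgebra ℝ L] [CommRing C] [Algebra ℝ C] [Module C L]
    [AddCommGroup E] [Module ℝ E] [Module C E] [IsScalarTower ℝ C E]
    [Module.Finite C E] [Module.Free C E]
    (ρ : L →ₗ[ℝ] Derivation ℝ C C)
    (hρ : ∀ (a b : L) (f : C), ρ ⁅a, b⁆ f = ρ a (ρ b f) - ρ b (ρ a f))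
    (hLeib : ∀ (a b : L) (f : C), ⁅a, f • b⁆ = f • ⁅a, b⁆ + ρ a f • b)
    (D0 D1 : L →ₗ[ℝ] Module.End ℝ E) (h0 : IsConn ρ D0) (h1 : IsConn ρ D1)
    (hflat0 : ∀ a b : L, curv D0 a b = 0) (hflat1 : ∀ a b : L, curv D1 a b = 0)
    (p : ℕ) (hp : 1 ≤ p) :
    ∀ v : Fin (2 * (p - 1) + 1) → L,
      csPair C D0 D1 p v
        = ((-1 : ℝ) ^ (p + 1) * ((p.factorial : ℝ) * ((p - 1).factorial : ℝ))
              / ((2 * p - 1).factorial : ℝ)) •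
            trR C (wpow1 (fun u : Fin 1 → L => (D1 - D0) (u 0)) (2 * p - 1)
              (fun i => v (Fin.cast (by omega) i))) := by
  intro v
  obtain ⟨q, rfl⟩ : ∃ q, p = q + 1 := ⟨p - 1, by omega⟩
  unfold csPair
  rw [wpow1_eq (fun x => (D1 - D0) x), altP_cast _ (by omega)]
  rw [intPoly_eq _ ((Polynomial.X ^ 2 - Polynomial.X) ^ q)
    (trR C (altP (fun x => (D1 - D0) x) (2 * (q + 1 - 1) + 1) v))]
  · rw [smul_smul]
    congr 1
    have hb := beta_int q q
    have : ∀ t : ℝ, ((Polynomial.X ^ 2 - Polynomial.X : Polynomial ℝ) ^ q).eval t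
        = (-1) ^ q * (t ^ q * (1 - t) ^ q) := by
      intro t
      simp only [Polynomial.eval_pow, Polynomial.eval_sub, Polynomial.eval_X, ← mul_pow]
      congr 1
      ring
    simp only [this]
    rw [intervalIntegral.integral_const_mul, hb]
    have e : 2 * (q + 1) - 1 = q + q + 1 := by omega
    rw [e, Nat.add_sub_cancel, Nat.factorial_succ q]
    push_cast
    ring
  · intro t
    have hc : (fun v : Fin 1 → L => (D1 - D0) (v 0))
        = fun v => (1 : ℝ) • altP (fun x => (D1 - D0) x) 1 v := by
      simp only [one_smul]
      rw [altP_one]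
    rw [curv2_eq D0 D1 hflat0 hflat1, hc, wpow_eq, wedge_smul_smul, wedge_altP,
      altP_cast _ (by omega), trR_smul]
    simp
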